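/- Assume S[ω] and S[μ] are integrally closed (i.e. f,g ∉ S^{p∧p²}), h₁ ≠ 0, h₂ ≠ 0, and fg ∈ S^{p∧p²}. Let a₁,…,a_p ∈ A and set y := p^{−1} Σ_{i=1}^{p} a_i (μ−h₂)^{p−i} (ω−h₁)^{i−1} ∈ K. Then y ∈ R if and only if a_{i−1}h₂ + a_i h₁ ∈ P for all 2 ≤ i ≤ p, where P = (p, ω−h₁, μ−h₂)A. -/

import Mathlib

/-- A height one prime ideal of a commutative ring. -/
def IsHeightOnePrime {S : Type*} [CommRing S] (P : Ideal S) : Prop :=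
  ∃ hP : P.IsPrime, Order.height (⟨P, hP⟩ : PrimeSpectrum S) = 1

/-- `c ∈ S` is square free if `P S_P = c S_P` for every height one prime `P` containing `c`. -/
def PaperSquarefree {S : Type*} [CommRing S] (c : S) : Prop :=
  ∀ (P : Ideal S) (hP : P.IsPrime), Order.height (⟨P, hP⟩ : PrimeSpectrum S) = 1 → c ∈ P →
    haveI := hP
    Ideal.map (algebraMap S (Localization.AtPrime P)) P =
      Ideal.span {algebraMap S (Localization.AtPrime P) c}

/-- Two elements satisfy `𝒜₁` if no height one prime contains both of them. -/
def SatisfiesA1 {S : Type*} [CommRing S] (f g : S) : Prop :=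
  ∀ P : Ideal S, IsHeightOnePrime P → ¬(f ∈ P ∧ g ∈ P)

/-- The depth of a module over a local ring: the supremum of the lengths of
regular sequences on `M` contained in the maximal ideal. -/
noncomputable def modDepth (S : Type*) [CommRing S] [IsLocalRing S]
    (M : Type*) [AddCommGroup M] [Module S M] : ℕ∞ :=
  sSup {n : ℕ∞ | ∃ rs : List S, (rs.length : ℕ∞) = n ∧
    (∀ r ∈ rs, r ∈ IsLocalRing.maximalIdeal S) ∧ RingTheory.Sequence.IsRegular M rs}

/-- A commutative ring is Cohen-Macaulay if each of its localizations at a prime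
has depth equal to its Krull dimension. -/
def IsCMRing (R : Type*) [CommRing R] : Prop :=
  ∀ (Q : Ideal R) (hQ : Q.IsPrime),
    haveI := hQ
    (modDepth (Localization.AtPrime Q) (Localization.AtPrime Q) : WithBot ℕ∞) =
      ringKrullDim (Localization.AtPrime Q)

/-- The `n`-th symbolic power of a prime ideal `P`, i.e. `Pⁿ A_P ∩ A`. -/
noncomputable def symbPow {A : Type*} [CommRing A] (P : Ideal A) (hP : P.IsPrime) (n : ℕ) :
    Ideal A :=
  haveI := hP
  Ideal.comap (algebraMap A (Localization.AtPrime P))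
    (Ideal.map (algebraMap A (Localization.AtPrime P)) (P ^ n))

/-- `ω`, as an element of the subalgebra `A = S[ω,μ]`. -/
noncomputable def omegaA {S : Type*} [CommRing S] {K : Type*} [Field K] [Algebra S K]
    (ω μ : K) : Algebra.adjoin S ({ω, μ} : Set K) :=
  ⟨ω, Algebra.subset_adjoin (Set.mem_insert _ _)⟩

/-- `μ`, as an element of the subalgebra `A = S[ω,μ]`. -/
noncomputable def muA {S : Type*} [CommRing S] {K : Type*} [Field K] [Algebra S K]
    (ω μ : K) : Algebra.adjoin S ({ω, μ} : Set K) :=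
  ⟨μ, Algebra.subset_adjoin (Set.mem_insert_of_mem _ rfl)⟩

/-- The ideal `P = (p, ω−h₁, μ−h₂)` of `A = S[ω,μ]`. -/
noncomputable def Pid {S : Type*} [CommRing S] {K : Type*} [Field K] [Algebra S K]
    (p : ℕ) (ω μ : K) (h₁ h₂ : S) : Ideal (Algebra.adjoin S ({ω, μ} : Set K)) :=
  Ideal.span {(p : Algebra.adjoin S ({ω, μ} : Set K)),
    omegaA ω μ - algebraMap S _ h₁, muA ω μ - algebraMap S _ h₂}

/-- The colon module `(A :_K N) = {x ∈ K : x·N ⊆ A}`, as an `S`-submodule of `K`. -/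
noncomputable def colonSubmodule (S : Type*) [CommRing S] (K : Type*) [Field K] [Algebra S K]
    (A : Subalgebra S K) (N : Set K) : Submodule S K where
  carrier := {x : K | ∀ z ∈ N, x * z ∈ A}
  add_mem' := fun hx hy z hz => by
    simpa [add_mul] using add_mem (hx z hz) (hy z hz)
  zero_mem' := fun z hz => by simpa using A.zero_mem
  smul_mem' := fun c x hx z hz => by
    rw [Algebra.smul_def, mul_assoc]
    exact mul_mem (A.algebraMap_mem c) (hx z hz)

/-- `M` admits a free resolution `0 → Sⁿ → Sᵐ → M → 0`; for a finitely generated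
module over a Noetherian local ring this says exactly `pd_S(M) ≤ 1`. -/
def HasFreeResLengthLE1 (S : Type*) [CommRing S] (M : Type*) [AddCommGroup M] [Module S M] :
    Prop :=
  ∃ (n m : ℕ) (φ : (Fin n → S) →ₗ[S] (Fin m → S)) (ψ : (Fin m → S) →ₗ[S] M),
    Function.Injective φ ∧ Function.Surjective ψ ∧ LinearMap.range φ = LinearMap.ker ψ

/-- The ideal `Q` contains an `S`-regular sequence of length three, i.e. `Q` has grade
(at least) three. -/
def ContainsRegSeq3 (S : Type*) [CommRing S] (Q : Ideal S) : Prop :=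
  ∃ rs : List S, rs.length = 3 ∧ (∀ r ∈ rs, r ∈ Q) ∧ RingTheory.Sequence.IsRegular S rs

/-
Put `u = ω - h₁`, `w = μ - h₂` and `X = ωμ - h₁h₂ = ωw + h₂u`. Since `fg ∈ S^{p∧p²}`, the power
`X ^ (p - 1)` is divisible by `p` in the normal ring `R`.

If the `aᵢ` satisfy the congruences, then modulo `p` the sum `ω ^ (p - 1) * ∑ aᵢ w^(p-i) u^(i-1)` is
a multiple of `∑ (ωw)^(p-i) (-h₂u)^(i-1)`, and this geometric sum is congruent to
`(ωw + h₂u) ^ (p - 1) = X ^ (p - 1)`. Hence `ω ^ (p - 1) * y ∈ R`, so both `f * y` and `p * y` are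
integral, and `y` is integral because `p` is a prime not dividing `f`.

Conversely, choose a valuation `v` of `K` over the prime `p` of `S`. Replacing `v` by its conjugate
under `ωμ ↦ ζωμ` if necessary, `v (X ^ (p - 1)) = v p = v (u ^ p)`. Then `s = X / u` is a small
element with `v (s ^ (p - 1)) = v u`, and integrality of `y` says that a polynomial in
`ωw / u = s - h₂` of degree `< p` over `S` has value at most `v (s ^ (p - 1))`. Expanding in powers
of `s` shows that this polynomial is a multiple of `(T + h₂) ^ (p - 1)` modulo `p`, and reading off
the binomial coefficients gives the congruences.
-/

open Polynomial

section Congruence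

variable {R : Type*} [CommRing R] {p : ℕ}

theorem exists_sub_pow_prime_eq (hp : p.Prime) (x y : R) :
    ∃ r, (x - y) ^ p = x ^ p - y ^ p + p * ((x - y) * r) := by
  obtain ⟨r, hr⟩ := exists_add_pow_prime_eq hp (x - y) y
  rw [sub_add_cancel] at hr
  exact ⟨-(y * r), by linear_combination -hr⟩

theorem natCast_dvd_sub_pow_prime_iff (hp : p.Prime) (x y : R) :
    (p : R) ∣ (x - y) ^ p ↔ (p : R) ∣ x ^ p - y ^ p := by
  obtain ⟨r, hr⟩ := exists_sub_pow_prime_eq hp x y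
  rw [hr, dvd_add_left (dvd_mul_right _ _)]

theorem dvd_choose_pred_add_choose_pred_succ (hp : p.Prime) {k : ℕ} (hk : k + 1 < p) :
    p ∣ (p - 1).choose k + (p - 1).choose (k + 1) := by
  have hpascal : p.choose (k + 1) = (p - 1).choose k + (p - 1).choose (k + 1) :=
    Nat.choose_eq_choose_pred_add hp.pos k.succ_pos
  exact hpascal ▸ hp.dvd_choose_self k.succ_ne_zero hk

theorem natCast_dvd_choose_pred_sub_neg_one_pow (hp : p.Prime) {k : ℕ} (hk : k < p) :
    (p : ℤ) ∣ (p - 1).choose k - (-1) ^ k := by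
  induction k with
  | zero => simp
  | succ k ih =>
    have hdvd : (p : ℤ) ∣ (p - 1).choose k + (p - 1).choose (k + 1) := by
      exact_mod_cast dvd_choose_pred_add_choose_pred_succ hp hk
    simpa [pow_succ, sub_neg_eq_add] using dvd_sub hdvd (ih (k.lt_succ_self.trans hk))

theorem natCast_dvd_geom_sum₂_sub_add_pow (hp : p.Prime) (x y : R) :
    (p : R) ∣ ∑ k ∈ Finset.range p, x ^ (p - 1 - k) * (-y) ^ k - (x + y) ^ (p - 1) := by
  rw [add_comm x y, add_pow, Nat.sub_add_cancel hp.one_le, ← Finset.sum_sub_distrib]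
  refine Finset.dvd_sum fun k hk => ?_
  have hchoose : (p : R) ∣ (p - 1).choose k - (-1) ^ k := by
    simpa using (Int.castRingHom R).map_dvd
      (natCast_dvd_choose_pred_sub_neg_one_pow hp (Finset.mem_range.1 hk))
  convert hchoose.mul_left (-(x ^ (p - 1 - k) * y ^ k)) using 1
  rw [neg_pow y]
  ring

theorem coeff_add_mul_coeff_succ_eq_zero [CharP R p] (hp : p.Prime) {F : R[X]}
    (hF : F.natDegree < p) {h : R} (hcoeff : ∀ k < p - 1, (taylor (-h) F).coeff k = 0) {k : ℕ}
    (hk : k < p - 1) : F.coeff k + h * F.coeff (k + 1) = 0 := by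
  obtain ⟨c, hc⟩ : ∃ c, taylor (-h) F = C c * X ^ (p - 1) := by
    refine ⟨(taylor (-h) F).coeff (p - 1), ext fun j => ?_⟩
    rw [coeff_C_mul_X_pow]
    split_ifs with hj
    · rw [hj]
    · obtain hlt | hgt := lt_or_gt_of_ne hj
      · exact hcoeff j hlt
      · exact coeff_eq_zero_of_natDegree_lt (by rw [natDegree_taylor]; omega)
  have hFc : F = C c * (X + C h) ^ (p - 1) := by
    have := congrArg (taylor h) hc
    simpa [taylor_taylor] using this
  have hchoose : ((p - 1).choose k + (p - 1).choose (k + 1) : R) = 0 := by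
    rw [← Nat.cast_add, CharP.cast_eq_zero_iff R p]
    exact dvd_choose_pred_add_choose_pred_succ hp (by omega)
  have hpow : h ^ (p - 1 - k) = h * h ^ (p - 1 - (k + 1)) := by
    rw [← pow_succ']
    congr 1
    omega
  rw [hFc, coeff_C_mul, coeff_C_mul, coeff_X_add_C_pow, coeff_X_add_C_pow, hpow]
  linear_combination c * h * h ^ (p - 1 - (k + 1)) * hchoose

theorem sq_dvd_sub_pow_of_sq_dvd_sub_pow (hp : p.Prime) (hpR : Prime (p : R)) {m x y : R}
    (hx : (p : R) ^ 2 ∣ m - x ^ p) (hy : (p : R) ∣ m - y ^ p) :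
    (p : R) ^ 2 ∣ m - y ^ p := by
  have hpow : (p : R) ∣ x ^ p - y ^ p := by
    rw [← sub_sub_sub_cancel_left]
    exact dvd_sub hy ((dvd_pow_self _ two_ne_zero).trans hx)
  have hxy : (p : R) ∣ x - y := hpR.dvd_of_dvd_pow ((natCast_dvd_sub_pow_prime_iff hp x y).2 hpow)
  have hsq : (p : R) ^ 2 ∣ x ^ p - y ^ p := by simpa using dvd_sub_pow_of_dvd_sub hxy 1
  exact sub_add_sub_cancel m (x ^ p) (y ^ p) ▸ dvd_add hx hsq

theorem not_dvd_of_sq_dvd_mul_sub_pow [IsDomain R] {q f g h x a : R} {n : ℕ} (hq : Prime q)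
    (hn : 2 ≤ n) (hf : f = h ^ n + a * q) (ha : ¬ q ∣ a) (hfg : ¬ (q ∣ f ∧ q ∣ g))
    (hx : q ^ 2 ∣ f * g - x ^ n) : ¬ q ∣ f := by
  intro hqf
  have hsq {y : R} (hy : q ∣ y ^ n) : q ^ 2 ∣ y ^ n :=
    (pow_dvd_pow_of_dvd (hq.dvd_of_dvd_pow hy) 2).trans (pow_dvd_pow y hn)
  have hh : q ^ 2 ∣ h ^ n := hsq ((dvd_add_left (dvd_mul_left q a)).1 (hf ▸ hqf))
  have hxn : q ^ 2 ∣ x ^ n :=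
    hsq ((dvd_sub_right (hqf.mul_right g)).1 ((dvd_pow_self _ two_ne_zero).trans hx))
  have hf2 : q ^ 2 ∣ f :=
    hq.pow_dvd_of_dvd_mul_right 2 (fun hqg => hfg ⟨hqf, hqg⟩) ((dvd_sub_left hxn).1 hx)
  rw [hf, dvd_add_right hh, pow_two, mul_dvd_mul_iff_right hq.ne_zero] at hf2
  exact ha hf2

theorem pow_mul_sub_neg_pow_mul_mem {P : Ideal R} {x h₁ h₂ : R} (hx : x - h₁ ∈ P)
    {c : ℕ → R} {n : ℕ} (hc : ∀ k < n, c k * h₂ + c (k + 1) * h₁ ∈ P) {k : ℕ} (hk : k ≤ n) :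
    x ^ k * c k - (-h₂) ^ k * c 0 ∈ P := by
  induction k with
  | zero => simp
  | succ k ih =>
    have hnext : c k * h₂ + c (k + 1) * x ∈ P := by
      convert P.add_mem (hc k hk) (P.mul_mem_left (c (k + 1)) hx) using 1
      ring
    have hstep := P.add_mem (P.mul_mem_left (x ^ k) hnext) (P.mul_mem_left (-h₂) (ih (by omega)))
    convert hstep using 1
    ring

end Congruence

section FiniteSum

variable {R : Type*} [CommRing R]

theorem coeff_sum_C_mul_X_pow_sub (r : ℕ → R) {n j : ℕ} (hj : j < n) :
    (∑ k ∈ Finset.range n, C (r k) * X ^ (n - 1 - k)).coeff (n - 1 - j) = r j := by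
  rw [finsetSum_coeff, Finset.sum_eq_single_of_mem j (Finset.mem_range.2 hj)]
  · simp
  · intro k hk hkj
    have := Finset.mem_range.1 hk
    rw [coeff_C_mul_X_pow, if_neg (by omega)]

theorem sum_Icc_one_mul_pow_mul_pow (c : ℕ → R) (x y : R) (n : ℕ) :
    ∑ i ∈ Finset.Icc 1 n, c i * x ^ (n - i) * y ^ (i - 1) =
      ∑ k ∈ Finset.range n, c (k + 1) * x ^ (n - 1 - k) * y ^ k := by
  rw [← Finset.Ico_add_one_right_eq_Icc, Finset.sum_Ico_eq_sum_range, Nat.add_sub_cancel]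
  simp only [Nat.add_comm 1, Nat.add_sub_cancel, Nat.sub_add_eq, Nat.sub_right_comm n _ 1]

theorem natDegree_sum_C_mul_X_pow_sub_lt (r : ℕ → R) {n : ℕ} (hn : n ≠ 0) :
    (∑ k ∈ Finset.range n, C (r k) * X ^ (n - 1 - k)).natDegree < n := by
  refine (natDegree_sum_le_of_forall_le _ _ (n := n - 1) fun k _ => ?_).trans_lt
    (Nat.sub_one_lt hn)
  exact (natDegree_C_mul_X_pow_le _ _).trans (Nat.sub_le _ _)

theorem pow_pred_mul_aeval_sum_C_mul_X_pow_sub {A : Type*} [CommRing A] [Algebra R A] (r : ℕ → R)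
    (u t : A) (n : ℕ) :
    u ^ (n - 1) * aeval t (∑ k ∈ Finset.range n, C (r k) * X ^ (n - 1 - k)) =
      ∑ k ∈ Finset.range n, algebraMap R A (r k) * (u * t) ^ (n - 1 - k) * u ^ k := by
  rw [map_sum, Finset.mul_sum]
  refine Finset.sum_congr rfl fun k hk => ?_
  rw [← pow_mul_pow_sub u (Nat.le_sub_one_of_lt (Finset.mem_range.1 hk)), map_mul, map_pow,
    aeval_C, aeval_X]
  ring

end FiniteSum

theorem natCast_ne_zero_of_faithfulSMul (R : Type*) {A : Type*} [CommSemiring R] [Semiring A]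
    [Algebra R A] [FaithfulSMul R A] {n : ℕ} (hn : (n : R) ≠ 0) : (n : A) ≠ 0 := by
  have : NeZero (n : R) := ⟨hn⟩
  exact (NeZero.of_faithfulSMul R A n).out

section NormalDomain

variable {R : Type*} [CommRing R] [IsDomain R] [IsIntegrallyClosed R] {p : ℕ}

theorem dvd_of_pow_eq_pow_mul_add {q x c r : R} (hq : q ≠ 0) {n : ℕ}
    (h : x ^ (n + 2) = q ^ (n + 1) * (c * x + q * r)) :
    q ∣ x := by
  let φ := algebraMap R (FractionRing R)
  have hφq : φ q ≠ 0 := by simpa [φ] using hq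
  have hroot : (φ x / φ q) ^ (n + 2) = φ c * (φ x / φ q) + φ r := by
    have hφ := congrArg φ h
    simp only [map_pow, map_add, map_mul] at hφ
    rw [div_pow, hφ]
    field_simp
    ring
  have hint : IsIntegral R (φ x / φ q) := by
    refine ⟨X ^ (n + 2) - (C c * X + C r), ?_, by simp [hroot, φ]⟩
    exact monic_X_pow_sub (degree_linear_le.trans_lt (by norm_cast; omega))
  obtain ⟨w, hw⟩ := IsIntegrallyClosed.isIntegral_iff.1 hint
  refine ⟨w, IsFractionRing.injective R (FractionRing R) ?_⟩
  rw [map_mul, hw, mul_div_cancel₀ _ hφq]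

theorem natCast_dvd_sub_pow_pred (hp : p.Prime) (hp0 : (p : R) ≠ 0) {x y : R}
    (h : (p : R) ^ 2 ∣ x ^ p - y ^ p) :
    (p : R) ∣ (x - y) ^ (p - 1) := by
  obtain ⟨r, hr⟩ := exists_sub_pow_prime_eq hp x y
  obtain ⟨d, hd⟩ := h
  obtain ⟨n, rfl⟩ : ∃ n, p = n + 2 := ⟨p - 2, (Nat.sub_add_cancel hp.two_le).symm⟩
  set q : R := ((n + 2 : ℕ) : R)
  obtain ⟨k, hk⟩ : q ∣ (q * d + (x - y) * r) ^ (n + 1) - ((x - y) * r) ^ (n + 1) :=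
    (Dvd.intro _ (add_sub_cancel_right _ _).symm).trans (sub_dvd_pow_sub_pow _ _ _)
  refine dvd_of_pow_eq_pow_mul_add hp0 (n := n) (c := r ^ (n + 1)) (r := k) ?_
  calc ((x - y) ^ (n + 1)) ^ (n + 2) = ((x - y) ^ (n + 2)) ^ (n + 1) := pow_right_comm _ _ _
    _ = q ^ (n + 1) * (q * d + (x - y) * r) ^ (n + 1) := by rw [hr, hd, ← mul_pow]; ring
    _ = q ^ (n + 1) * (r ^ (n + 1) * (x - y) ^ (n + 1) + q * k) := by
      rw [sub_eq_iff_eq_add'.1 hk, mul_pow _ r, mul_comm (r ^ _)]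

theorem span_pair_pow_le_of_dvd_pow {q u v : R} {n : ℕ} (hn : n ≠ 0) (hu : q ∣ u ^ n)
    (hv : q ∣ v ^ n) : Ideal.span {u, v} ^ n ≤ Ideal.span {q} := by
  rw [Ideal.span_insert, ← Ideal.add_eq_sup, add_pow, Ideal.sum_eq_sup, Finset.sup_le_iff]
  intro i hi
  obtain ⟨j, rfl⟩ := Nat.exists_eq_add_of_le (Finset.mem_range_succ_iff.1 hi)
  refine Ideal.mul_le_left.trans ?_
  rw [Nat.add_sub_cancel_left, Ideal.span_singleton_pow, Ideal.span_singleton_pow,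
    Ideal.span_singleton_mul_span_singleton, Ideal.span_singleton_le_span_singleton,
    ← IsIntegrallyClosed.pow_dvd_pow_iff hn, mul_pow, pow_right_comm u, pow_right_comm v, pow_add]
  exact mul_dvd_mul (pow_dvd_pow_of_dvd hu i) (pow_dvd_pow_of_dvd hv j)

theorem dvd_mul_pow_mul_pow_of_mem_span {q u v z : R} {n : ℕ} (hu : q ∣ u ^ n) (hv : q ∣ v ^ n)
    (hz : z ∈ Ideal.span {q, u, v}) {k : ℕ} (hk : k < n) :
    q ∣ z * (v ^ (n - 1 - k) * u ^ k) := by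
  have hn : n ≠ 0 := Nat.ne_zero_of_lt hk
  obtain ⟨d, w, hw, rfl⟩ := Ideal.mem_span_insert.1 hz
  have hmon : v ^ (n - 1 - k) * u ^ k ∈ Ideal.span {u, v} ^ (n - 1) := by
    rw [← Nat.sub_add_cancel (Nat.le_sub_one_of_lt hk), pow_add, Nat.add_sub_cancel]
    exact Ideal.mul_mem_mul (Ideal.pow_mem_pow (Ideal.subset_span (by simp)) _)
      (Ideal.pow_mem_pow (Ideal.subset_span (by simp)) _)
  rw [add_mul, mul_right_comm]
  refine dvd_add (dvd_mul_left _ _) (Ideal.mem_span_singleton.1 ?_)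
  refine span_pair_pow_le_of_dvd_pow hn hu hv ?_
  rw [← mul_pow_sub_one hn]
  exact Ideal.mul_mem_mul hw hmon

theorem natCast_dvd_pow_pred_mul_sum (hp : p.Prime) (hp0 : (p : R) ≠ 0) {x y h₁ h₂ : R}
    (hx : (p : R) ∣ x ^ p - h₁ ^ p) (hy : (p : R) ∣ y ^ p - h₂ ^ p)
    (hxy : (p : R) ^ 2 ∣ (x * y) ^ p - (h₁ * h₂) ^ p) {c : ℕ → R}
    (hc : ∀ k < p - 1, c k * h₂ + c (k + 1) * h₁ ∈ Ideal.span {(p : R), x - h₁, y - h₂}) :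
    (p : R) ∣ x ^ (p - 1) *
      ∑ k ∈ Finset.range p, c k * (y - h₂) ^ (p - 1 - k) * (x - h₁) ^ k := by
  set u := x - h₁ with hu
  set v := y - h₂ with hv
  have hup : (p : R) ∣ u ^ p := (natCast_dvd_sub_pow_prime_iff hp _ _).2 hx
  have hvp : (p : R) ∣ v ^ p := (natCast_dvd_sub_pow_prime_iff hp _ _).2 hy
  have hsum : (p : R) ∣ x ^ (p - 1) * ∑ k ∈ Finset.range p, c k * v ^ (p - 1 - k) * u ^ k -
      c 0 * ∑ k ∈ Finset.range p, (x * v) ^ (p - 1 - k) * (-(h₂ * u)) ^ k := by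
    rw [Finset.mul_sum, Finset.mul_sum, ← Finset.sum_sub_distrib]
    refine Finset.dvd_sum fun k hk => ?_
    have hkp : k ≤ p - 1 := Nat.le_sub_one_of_lt (Finset.mem_range.1 hk)
    have hmem : x ^ k * c k - (-h₂) ^ k * c 0 ∈ Ideal.span {(p : R), u, v} :=
      pow_mul_sub_neg_pow_mul_mem (Ideal.subset_span (by simp [hu])) hc hkp
    have hdvd := dvd_mul_pow_mul_pow_of_mem_span hup hvp hmem (Finset.mem_range.1 hk)
    convert hdvd.mul_left (x ^ (p - 1 - k)) using 1
    rw [← pow_sub_mul_pow x hkp, ← neg_mul, mul_pow, mul_pow (-h₂)]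
    ring
  have hX : (p : R) ∣ (x * v + h₂ * u) ^ (p - 1) := by
    convert natCast_dvd_sub_pow_pred hp hp0 hxy using 2
    rw [hu, hv]
    ring
  have hgeom := natCast_dvd_geom_sum₂_sub_add_pow hp (x * v) (h₂ * u)
  exact (dvd_sub_left (((dvd_sub_left hX).1 hgeom).mul_left _)).1 hsum

end NormalDomain

section HeightOne

variable {S : Type*} [CommRing S]

theorem isHeightOnePrime_span_singleton [IsDomain S] [IsNoetherianRing S] {q : S} (hq : Prime q) :
    IsHeightOnePrime (Ideal.span {q}) := by
  have hprime : (Ideal.span {q}).IsPrime := (Ideal.span_singleton_prime hq.ne_zero).2 hq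
  have hle : (Ideal.span {q}).height ≤ 1 :=
    Ideal.height_le_one_of_isPrincipal_of_mem_minimalPrimes (Ideal.span {q}) _
      (Ideal.minimalPrimes_eq_subsingleton_self (I := Ideal.span {q}) ▸ rfl)
  have hne : (Ideal.span {q}).height ≠ 0 := by
    rw [Ne, Ideal.height_eq_zero_iff_eq_bot, Ideal.span_singleton_eq_bot]
    exact hq.ne_zero
  refine ⟨hprime, ?_⟩
  rw [← PrimeSpectrum.height_eq_orderHeight]
  exact hle.antisymm (Order.one_le_iff_pos.2 (pos_iff_ne_zero.2 hne))

theorem SatisfiesA1.not_dvd_and_dvd [IsDomain S] [IsNoetherianRing S] {f g : S}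
    (h : SatisfiesA1 f g) {q : S} (hq : Prime q) : ¬ (q ∣ f ∧ q ∣ g) := by
  simpa only [Ideal.mem_span_singleton] using h _ (isHeightOnePrime_span_singleton hq)

end HeightOne

section Irreducible

variable {L K : Type*} [Field L] [Field K] [Algebra L K]

theorem irreducible_X_pow_sub_C_of_finrank_eq_sq {n : ℕ} (hn : n ≠ 0) {α β : K} {a b : L}
    (hα : α ^ n = algebraMap L K a) (hβ : β ^ n = algebraMap L K b)
    (htop : IntermediateField.adjoin L {α, β} = ⊤) (hdeg : Module.finrank L K = n ^ 2) :
    Irreducible (X ^ n - C a) := by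
  have hroot {γ : K} {c : L} (hγ : γ ^ n = algebraMap L K c) : aeval γ (X ^ n - C c) = 0 := by
    simp [hγ]
  have hint {γ : K} {c : L} (hγ : γ ^ n = algebraMap L K c) : IsIntegral L γ :=
    ⟨_, monic_X_pow_sub_C c hn, hroot hγ⟩
  have hle {γ : K} {c : L} (hγ : γ ^ n = algebraMap L K c) : (minpoly L γ).natDegree ≤ n :=
    (natDegree_le_of_dvd (minpoly.dvd L γ (hroot hγ)) (X_pow_sub_C_ne_zero hn.bot_lt c)).trans_eq
      natDegree_X_pow_sub_C
  have hsq : n * n ≤ (minpoly L α).natDegree * n := by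
    calc n * n = Module.finrank L (IntermediateField.adjoin L {α, β}) := by
          rw [htop, IntermediateField.finrank_top', hdeg, pow_two]
      _ ≤ (minpoly L α).natDegree * (minpoly L β).natDegree := by
        rw [Set.insert_eq, IntermediateField.adjoin_union,
          ← IntermediateField.adjoin.finrank (hint hα),
          ← IntermediateField.adjoin.finrank (hint hβ)]
        exact IntermediateField.finrank_sup_le _ _
      _ ≤ (minpoly L α).natDegree * n := Nat.mul_le_mul_left _ (hle hβ)
  have hmin : X ^ n - C a = minpoly L α :=
    eq_of_monic_of_dvd_of_natDegree_le (minpoly.monic (hint hα)) (monic_X_pow_sub_C a hn)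
      (minpoly.dvd L α (hroot hα))
      (natDegree_X_pow_sub_C.trans_le (Nat.le_of_mul_le_mul_right hsq hn.bot_lt))
  exact hmin ▸ minpoly.irreducible (hint hα)

theorem irreducible_X_pow_sub_C_mul_of_finrank_eq_sq {n : ℕ} (hn : 1 < n) {α β : K} {a b : L}
    (hα : α ^ n = algebraMap L K a) (hβ : β ^ n = algebraMap L K b)
    (htop : IntermediateField.adjoin L {α, β} = ⊤) (hdeg : Module.finrank L K = n ^ 2) :
    Irreducible (X ^ n - C (a * b)) := by
  have hn0 : n ≠ 0 := Nat.ne_zero_of_lt hn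
  have hα0 : α ≠ 0 := by
    rintro rfl
    have ha : a = 0 :=
      (FaithfulSMul.algebraMap_eq_zero_iff L K).1 (hα.symm.trans (zero_pow hn0))
    exact ne_zero_of_irreducible_X_pow_sub_C' hn.ne'
      (irreducible_X_pow_sub_C_of_finrank_eq_sq hn0 hα hβ htop hdeg) ha
  refine irreducible_X_pow_sub_C_of_finrank_eq_sq (α := α * β) hn0
    (by rw [mul_pow, hα, hβ, map_mul]) hα (top_le_iff.1 ?_) hdeg
  have hαmem : α ∈ IntermediateField.adjoin L {α * β, α} :=
    IntermediateField.subset_adjoin _ _ (by simp)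
  have hβmem : α * β / α ∈ IntermediateField.adjoin L {α * β, α} :=
    div_mem (IntermediateField.subset_adjoin _ _ (by simp)) hαmem
  rw [mul_div_cancel_left₀ β hα0] at hβmem
  rw [← htop, IntermediateField.adjoin_le_iff]
  rintro x (rfl | rfl)
  exacts [hαmem, hβmem]

end Irreducible

section Adjoin

variable {S K : Type*} [CommRing S] [Field K] [Algebra S K]

theorem not_algebraMap_dvd_sub_pow_of_lt_natDegree_minpoly [IsDomain S] [IsIntegrallyClosed S]
    [FaithfulSMul S K] {q : S} (hq : ¬ IsUnit q) {x : K} (hx : IsIntegral S x) (h : S) {n : ℕ}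
    (hn : n < (minpoly S x).natDegree) :
    ¬ algebraMap S (Algebra.adjoin S {x}) q ∣
      (⟨x, Algebra.self_mem_adjoin_singleton S x⟩ - algebraMap S _ h) ^ n := by
  rintro ⟨⟨_, hw⟩, hd⟩
  rw [Algebra.adjoin_singleton_eq_range_aeval] at hw
  obtain ⟨W, rfl⟩ := hw
  have hroot : aeval x ((X - C h) ^ n - C q * W) = 0 := by
    simpa [sub_eq_zero] using congrArg Subtype.val hd
  let π := Ideal.Quotient.mk (Ideal.span {q})
  have : Nontrivial (S ⧸ Ideal.span {q}) :=
    Ideal.Quotient.nontrivial_iff.2 (Ideal.span_singleton_eq_top.not.2 hq)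
  have hdvd := Polynomial.map_dvd π (minpoly.isIntegrallyClosed_dvd hx hroot)
  have hπq : π q = 0 := Ideal.Quotient.eq_zero_iff_mem.2 (Ideal.mem_span_singleton_self q)
  rw [Polynomial.map_sub, Polynomial.map_mul, map_C, hπq, C_0, zero_mul, sub_zero,
    Polynomial.map_pow, Polynomial.map_sub, map_X, map_C] at hdvd
  refine ((minpoly.monic hx).map π).not_dvd_of_natDegree_lt
    ((monic_X_sub_C (π h)).pow n).ne_zero ?_ hdvd
  rwa [(minpoly.monic hx).natDegree_map, (monic_X_sub_C _).natDegree_pow, natDegree_X_sub_C,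
    mul_one]

theorem not_natCast_dvd_of_isIntegrallyClosed_adjoin (L : Type*) [IsDomain S] [IsIntegrallyClosed S]
    [Field L] [Algebra S L] [IsFractionRing S L] [Algebra L K] [IsScalarTower S L K] {p : ℕ}
    (hp : p.Prime) (hpS : Prime (p : S)) {f h a : S} (hf : f = h ^ p + a * p) {ω : K}
    (hω : ω ^ p = algebraMap S K f) (hirr : Irreducible (X ^ p - C (algebraMap S L f)))
    (hic : IsIntegrallyClosed (Algebra.adjoin S {ω})) : ¬ (p : S) ∣ a := by
  rintro ⟨d, rfl⟩
  have : FaithfulSMul S K := .trans S L K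
  have hint : IsIntegral S ω := .of_pow hp.pos (hω ▸ isIntegral_algebraMap)
  have hdeg : (minpoly S ω).natDegree = p := by
    rw [← (minpoly.monic hint).natDegree_map (algebraMap S L),
      ← minpoly.isIntegrallyClosed_eq_field_fractions' L hint,
      ← minpoly.eq_of_irreducible_of_monic hirr
        (by simp [hω, ← IsScalarTower.algebraMap_apply S L K]) (monic_X_pow_sub_C _ hp.ne_zero),
      natDegree_X_pow_sub_C]
  have hp0 : (p : Algebra.adjoin S {ω}) ≠ 0 := natCast_ne_zero_of_faithfulSMul S hpS.ne_zero
  refine not_algebraMap_dvd_sub_pow_of_lt_natDegree_minpoly hpS.not_isUnit hint h (n := p - 1)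
    (hdeg.symm ▸ Nat.sub_one_lt hp.ne_zero) ?_
  rw [map_natCast]
  refine natCast_dvd_sub_pow_pred hp hp0 ⟨algebraMap S _ d, Subtype.ext ?_⟩
  simp [hω, hf]
  ring

theorem mem_range_algebraMap_of_mul_pow {L : Type*} [IsDomain S] [Field L] [Algebra S L]
    [IsFractionRing S L] {q h : S} (hq : Prime q) (hh : ¬ q ∣ h) {c : L} {n : ℕ}
    (hcq : c * algebraMap S L q ^ n ∈ (algebraMap S L).range)
    (hch : c * algebraMap S L h ^ n ∈ (algebraMap S L).range) : c ∈ (algebraMap S L).range := by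
  obtain ⟨s, hs⟩ := hcq
  obtain ⟨t, ht⟩ := hch
  have hst : s * h ^ n = q ^ n * t := by
    apply IsFractionRing.injective S L
    simp only [map_mul, map_pow, hs, ht]
    ring
  obtain ⟨d, rfl⟩ := hq.pow_dvd_of_dvd_mul_right n (fun hd => hh (hq.dvd_of_dvd_pow hd))
    (Dvd.intro _ hst.symm)
  have hqL : algebraMap S L q ≠ 0 := by simpa using hq.ne_zero
  refine ⟨d, mul_left_cancel₀ (pow_ne_zero n hqL) ?_⟩
  rw [mul_comm _ c, ← hs, map_mul, map_pow]

theorem isIntegral_of_smul_of_smul (L : Type*) [IsDomain S] [IsIntegrallyClosed S] [Field L]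
    [Algebra S L] [IsFractionRing S L] [Algebra L K] [IsScalarTower S L K] {q h : S} (hq : Prime q)
    (hh : ¬ q ∣ h) {w : K} (hqw : IsIntegral S (q • w)) (hhw : IsIntegral S (h • w)) :
    IsIntegral S w := by
  have hqL : algebraMap S L q ≠ 0 := by simpa using hq.ne_zero
  have hhL : algebraMap S L h ≠ 0 := by
    simpa using fun h0 : h = 0 => hh (h0 ▸ dvd_zero q)
  have hwL : IsIntegral L w := by
    have hinv := (hqw.tower_top (A := L)).smul (algebraMap S L q)⁻¹
    rwa [← algebraMap_smul L q w, inv_smul_smul₀ hqL] at hinv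
  have hmem (s : S) (hs0 : algebraMap S L s ≠ 0) (hs : IsIntegral S (s • w)) (i : ℕ) :
      (minpoly L w).coeff i * algebraMap S L s ^ ((minpoly L w).natDegree - i) ∈
        (algebraMap S L).range := by
    rw [← coeff_scaleRoots, ← IsIntegrallyClosed.minpoly_smul hs0 hwL, algebraMap_smul,
      minpoly.isIntegrallyClosed_eq_field_fractions' L hs, coeff_map]
    exact ⟨_, rfl⟩
  have hlifts : minpoly L w ∈ lifts (algebraMap S L) :=
    lifts_iff_coeff_lifts _ |>.2 fun i =>
      mem_range_algebraMap_of_mul_pow hq hh (hmem q hqL hqw i) (hmem h hhL hhw i)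
  obtain ⟨Q, hQ, -, hmonic⟩ := lifts_and_natDegree_eq_and_monic hlifts (minpoly.monic hwL)
  refine ⟨Q, hmonic, ?_⟩
  rw [← aeval_def, ← aeval_map_algebraMap L, hQ, minpoly.aeval]

end Adjoin

section Valuation

variable {F Γ₀ : Type*} [Field F] [LinearOrderedCommGroupWithZero Γ₀] {v : Valuation F Γ₀}
  {p : ℕ} {x y : F}

theorem valuation_sub_pow_sub_le (hp : p.Prime) (hx : v x ≤ 1) (hy : v y ≤ 1) :
    v ((x - y) ^ p - (x ^ p - y ^ p)) ≤ v p * v (x - y) := by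
  obtain ⟨r, hr⟩ := exists_sub_pow_prime_eq hp (⟨x, hx⟩ : v.integer) ⟨y, hy⟩
  have hrF : (x - y) ^ p - (x ^ p - y ^ p) = p * ((x - y) * (r : F)) :=
    sub_eq_iff_eq_add'.2 (congrArg Subtype.val hr)
  rw [hrF, map_mul, map_mul]
  gcongr
  exact mul_le_of_le_one_right' r.2

theorem valuation_sub_pow_prime_le (hp : p.Prime) (hx : v x ≤ 1) (hy : v y ≤ 1)
    (hxy : v (x ^ p - y ^ p) ≤ v p) : v (x - y) ^ p ≤ v p := by
  rw [← map_pow, ← sub_add_cancel ((x - y) ^ p) (x ^ p - y ^ p)]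
  exact v.map_add_le ((valuation_sub_pow_sub_le hp hx hy).trans
    (mul_le_of_le_one_right' (v.map_sub_le hx hy))) hxy

theorem valuation_sub_pow_prime_eq (hp : p.Prime) (hp0 : v p ≠ 0) (hp1 : v p < 1) (hx : v x ≤ 1)
    (hy : v y ≤ 1) (hxy : v (x ^ p - y ^ p) = v p) : v (x - y) ^ p = v p := by
  have hlt : v (x - y) < 1 :=
    (pow_lt_one_iff_of_nonneg zero_le hp.ne_zero).1
      ((valuation_sub_pow_prime_le hp hx hy hxy.le).trans_lt hp1)
  have hdiff : v ((x - y) ^ p - (x ^ p - y ^ p)) < v (x ^ p - y ^ p) := by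
    rw [hxy]
    exact (valuation_sub_pow_sub_le hp hx hy).trans_lt
      (mul_lt_of_lt_one_right (zero_lt_iff.2 hp0) hlt)
  rw [← map_pow, ← hxy, ← v.map_add_eq_of_lt_left hdiff, add_sub_cancel]

theorem valuation_sub_pow_pred_le (hp : p.Prime) (hp1 : v p ≤ 1) (hx : v x ≤ 1) (hy : v y ≤ 1)
    (hxy : v (x ^ p - y ^ p) ≤ v p ^ 2) : v (x - y) ^ (p - 1) ≤ v p := by
  by_contra! hlt
  have hmul : v p * v (x - y) < v (x - y) ^ p := by
    rw [← pow_sub_one_mul hp.ne_zero]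
    refine mul_lt_mul_of_pos_right hlt (zero_lt_iff.2 fun h0 => ?_)
    rw [h0, zero_pow (Nat.sub_ne_zero_of_lt hp.one_lt)] at hlt
    exact not_lt_zero hlt
  have hle : v (x - y) ^ p ≤ v p ^ 2 := by
    have hadd := v.map_add ((x - y) ^ p - (x ^ p - y ^ p)) (x ^ p - y ^ p)
    rw [sub_add_cancel, map_pow, le_max_iff] at hadd
    exact (hadd.resolve_left ((valuation_sub_pow_sub_le hp hx hy).trans_lt hmul).not_ge).trans hxy
  refine (pow_lt_pow_left₀ hlt zero_le hp.ne_zero).not_ge ?_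
  calc (v (x - y) ^ (p - 1)) ^ p = (v (x - y) ^ p) ^ (p - 1) := pow_right_comm _ _ _
    _ ≤ (v p ^ 2) ^ (p - 1) := pow_le_pow_left₀ zero_le hle _
    _ = v p ^ (2 * (p - 1)) := (pow_mul _ _ _).symm
    _ ≤ v p ^ p := pow_le_pow_right_of_le_one' hp1 (by have := hp.two_le; omega)

theorem valuation_sub_one_pow_pred_eq_of_isPrimitiveRoot (hp : p.Prime) {ζ : F}
    (hζ : IsPrimitiveRoot ζ p) : v (ζ - 1) ^ (p - 1) = v p := by
  have hζ1 : v ζ = 1 := by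
    rw [← pow_eq_one_iff_of_nonneg zero_le hp.ne_zero, ← map_pow, hζ.pow_eq_one, map_one]
  have hfactor {k : ℕ} (hk : k ∈ Finset.range (p - 1)) : v (1 - ζ ^ (k + 1)) = v (ζ - 1) := by
    have O := Valuation.integer.integers v
    have hζO : IsPrimitiveRoot (⟨ζ, hζ1.le⟩ : v.integer) p :=
      IsPrimitiveRoot.coe_submonoidClass_iff.1 hζ
    have hcop : (k + 1).Coprime p := (Nat.coprime_of_lt_prime k.succ_ne_zero
      (Nat.add_lt_of_lt_sub (Finset.mem_range.1 hk)) hp).symm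
    have hassoc := hζO.associated_sub_one_pow_sub_one_of_coprime hcop
    rw [v.map_sub_swap]
    exact le_antisymm (O.le_of_dvd hassoc.dvd) (O.le_of_dvd hassoc.symm.dvd)
  have hprod : ∏ k ∈ Finset.range (p - 1), (1 - ζ ^ (k + 1)) = p := by
    obtain ⟨n, rfl⟩ := Nat.exists_eq_add_of_le' hp.one_le
    exact_mod_cast hζ.prod_one_sub_pow_eq_order
  rw [← hprod, map_prod, Finset.prod_congr rfl fun k hk => hfactor hk, Finset.prod_const,
    Finset.card_range]

theorem valuation_pow_mul_sub_pow_mul_le {h c r : F} (hx : v x ≤ 1) (hh : v h ≤ 1) (hr : v r ≤ 1)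
    (hcr : v (c - r) ≤ v (x - h)) (k : ℕ) : v (x ^ k * c - h ^ k * r) ≤ v (x - h) := by
  obtain ⟨d, hd⟩ := sub_dvd_pow_sub_pow (⟨x, hx⟩ : v.integer) ⟨h, hh⟩ k
  have hdF : x ^ k - h ^ k = (x - h) * (d : F) := congrArg Subtype.val hd
  have hsplit : x ^ k * c - h ^ k * r = x ^ k * (c - r) + (x - h) * (d * r) := by
    linear_combination r * hdF
  rw [hsplit]
  refine v.map_add_le ?_ ?_
  · rw [map_mul, map_pow]
    exact (mul_le_of_le_one_left' (pow_le_one' hx k)).trans hcr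
  · rw [map_mul, map_mul]
    exact mul_le_of_le_one_right' (mul_le_one' d.2 hr)

theorem valuation_sum_mul_pow_mul_pow_le (v : Valuation F Γ₀) {z : ℕ → F} {w u : F}
    {γ : Γ₀} {n : ℕ} (hz : ∀ k < n, v (z k) ≤ γ) (hw : v w ≤ v u) :
    v (∑ k ∈ Finset.range n, z k * w ^ (n - 1 - k) * u ^ k) ≤ γ * v u ^ (n - 1) := by
  refine v.map_sum_le fun k hk => ?_
  have hkn := Finset.mem_range.1 hk
  rw [← Nat.sub_add_cancel (Nat.le_sub_one_of_lt hkn), pow_add, map_mul, map_mul, map_pow, map_pow,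
    mul_assoc, Nat.add_sub_cancel]
  gcongr
  exact hz k hkn

theorem valuation_sum_mul_pow_mul_pow_le_of_pow_mul_sub_le {u w : F} {c d : ℕ → F}
    {n : ℕ} (hn : n ≠ 0) (hx : v x ≤ 1) (hw : v w ≤ v u)
    (hcd : ∀ k < n, v (x ^ k * c k - d k) ≤ v u)
    (hc : v (∑ k ∈ Finset.range n, c k * w ^ (n - 1 - k) * u ^ k) ≤ v u ^ n) :
    v (∑ k ∈ Finset.range n, d k * (x * w) ^ (n - 1 - k) * u ^ k) ≤ v u ^ n := by
  have hxw : v (x * w) ≤ v u := by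
    rw [map_mul]
    exact (mul_le_of_le_one_left' hx).trans hw
  have hdiff := valuation_sum_mul_pow_mul_pow_le v hcd hxw
  rw [mul_pow_sub_one hn] at hdiff
  have hmain :
      v (x ^ (n - 1) * ∑ k ∈ Finset.range n, c k * w ^ (n - 1 - k) * u ^ k) ≤ v u ^ n := by
    rw [map_mul, map_pow]
    exact (mul_le_of_le_one_left' (pow_le_one' hx _)).trans hc
  convert v.map_sub_le hmain hdiff using 2
  rw [Finset.mul_sum, ← Finset.sum_sub_distrib]
  refine Finset.sum_congr rfl fun k hk => ?_
  rw [← pow_mul_pow_sub x (Nat.le_sub_one_of_lt (Finset.mem_range.1 hk)), mul_pow]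
  ring

theorem valuation_le_of_mem_span {A Γ₀ : Type*} [CommRing A] [LinearOrderedCommGroupWithZero Γ₀]
    {v : Valuation A Γ₀} (hv : ∀ a, v a ≤ 1) {t : Set A} {γ : Γ₀} (ht : ∀ x ∈ t, v x ≤ γ) {z : A}
    (hz : z ∈ Ideal.span t) : v z ≤ γ := by
  induction hz using Submodule.span_induction with
  | mem x hx => exact ht x hx
  | zero => simp
  | add x y _ _ hx hy => exact v.map_add_le hx hy
  | smul a x _ hx =>
    rw [smul_eq_mul, map_mul]
    exact (mul_le_of_le_one_left' (hv a)).trans hx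

theorem exists_algHom_valuation_sub_pow_eq {L K Ω Γ₀ : Type*} [Field L] [Field K] [Field Ω]
    [Algebra L K] [Algebra.IsAlgebraic L K] [Algebra L Ω] [IsAlgClosed Ω]
    [LinearOrderedCommGroupWithZero Γ₀] (v : Valuation Ω Γ₀) {p : ℕ} (hp : p.Prime)
    (hp0 : (p : Ω) ≠ 0) (hp1 : v p ≤ 1) {m h : L} (hm : Irreducible (X ^ p - C m)) {η : K}
    (hη : η ^ p = algebraMap L K m) (hm1 : v (algebraMap L Ω m) = 1) (hh : v (algebraMap L Ω h) ≤ 1)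
    (hmh : v (algebraMap L Ω (m - h ^ p)) ≤ v p ^ 2) :
    ∃ τ : K →ₐ[L] Ω, v (τ η - algebraMap L Ω h) ^ (p - 1) = v p := by
  have : NeZero (p : Ω) := ⟨hp0⟩
  obtain ⟨ζ, hζ⟩ := HasEnoughRootsOfUnity.exists_primitiveRoot Ω p
  let σ : K →ₐ[L] Ω := IsAlgClosed.lift
  have hση : σ η ^ p = algebraMap L Ω m := by rw [← map_pow, hη, σ.commutes]
  have hση1 : v (σ η) = 1 := by
    rw [← pow_eq_one_iff_of_nonneg zero_le hp.ne_zero, ← map_pow, hση, hm1]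
  have hle : v (σ η - algebraMap L Ω h) ^ (p - 1) ≤ v p :=
    valuation_sub_pow_pred_le hp hp1 hση1.le hh (by rwa [hση, ← map_pow, ← map_sub])
  obtain heq | hlt := hle.eq_or_lt
  · exact ⟨σ, heq⟩
  have hmin : minpoly L η = X ^ p - C m :=
    (minpoly.eq_of_irreducible_of_monic hm (by simp [hη]) (monic_X_pow_sub_C m hp.ne_zero)).symm
  obtain ⟨τ, hτ⟩ : ∃ τ : K →ₐ[L] Ω, τ η = ζ * σ η :=
    IntermediateField.exists_algHom_of_splits_of_aeval
      (fun s => ⟨Algebra.IsIntegral.isIntegral s, IsAlgClosed.splits _⟩)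
      (by rw [hmin]; simp [mul_pow, hζ.pow_eq_one, hση])
  have hshift : v ((ζ - 1) * σ η) ^ (p - 1) = v p := by
    rw [map_mul, hση1, mul_one, valuation_sub_one_pow_pred_eq_of_isPrimitiveRoot hp hζ]
  have hlt' : v (σ η - algebraMap L Ω h) < v ((ζ - 1) * σ η) :=
    lt_of_pow_lt_pow_left₀ (p - 1) zero_le (hlt.trans_eq hshift.symm)
  refine ⟨τ, ?_⟩
  rw [hτ, ← hshift, ← v.map_add_eq_of_lt_left hlt']
  ring_nf

end Valuation

/-- A valuation `v` on an `S`-algebra has center `P` on `S` when `S` lies in the valuation ring of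
`v` and `P` is the contraction of its maximal ideal. -/
structure HasCenter {S F Γ₀ : Type*} [CommRing S] [Field F] [Algebra S F]
    [LinearOrderedCommGroupWithZero Γ₀] (v : Valuation F Γ₀) (P : Ideal S) : Prop where
  le_one : ∀ s : S, v (algebraMap S F s) ≤ 1
  lt_one_iff : ∀ s : S, v (algebraMap S F s) < 1 ↔ s ∈ P

section Center

variable {S F Γ₀ : Type*} [CommRing S] [Field F] [Algebra S F]
  [LinearOrderedCommGroupWithZero Γ₀] {v : Valuation F Γ₀}

namespace HasCenter

variable {P : Ideal S}

theorem eq_one_of_notMem (hv : HasCenter v P) {s : S} (hs : s ∉ P) : v (algebraMap S F s) = 1 :=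
  (hv.le_one s).eq_of_not_lt fun h => hs ((hv.lt_one_iff s).1 h)

theorem le_one_of_isIntegral (hv : HasCenter v P) {x : F} (hx : IsIntegral S x) : v x ≤ 1 := by
  let φ : S →+* v.integer := (algebraMap S F).codRestrict v.integer hv.le_one
  exact (Valuation.integer.integers v).mem_of_integral
    (hx.map_of_comp_eq φ (RingHom.id F) rfl)

theorem comap {F' : Type*} [Field F'] [Algebra S F'] (hv : HasCenter v P) (τ : F' →ₐ[S] F) :
    HasCenter (v.comap (τ : F' →+* F)) P :=
  ⟨fun s => by simpa using hv.le_one s, fun s => by simpa using hv.lt_one_iff s⟩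

theorem valuation_le_of_dvd (hv : HasCenter v P) {q s : S} (hqs : q ∣ s) :
    v (algebraMap S F s) ≤ v (algebraMap S F q) := by
  obtain ⟨t, rfl⟩ := hqs
  rw [map_mul, map_mul]
  exact mul_le_of_le_one_right' (hv.le_one t)

theorem valuation_natCast_lt_one {n : ℕ} (hv : HasCenter v (Ideal.span {(n : S)})) : v n < 1 := by
  simpa using (hv.lt_one_iff (n : S)).2 (Ideal.mem_span_singleton_self _)

theorem valuation_sub_pow_le {p : ℕ} (hp : p.Prime) (hv : HasCenter v P) {f h : S}
    (hf : (p : S) ∣ f - h ^ p) {x : F} (hx : x ^ p = algebraMap S F f) :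
    v (x - algebraMap S F h) ^ p ≤ v p := by
  have hx1 : v x ≤ 1 := hv.le_one_of_isIntegral (.of_pow hp.pos (hx ▸ isIntegral_algebraMap))
  refine valuation_sub_pow_prime_le hp hx1 (hv.le_one h) ?_
  rw [hx, ← map_pow, ← map_sub]
  simpa using hv.valuation_le_of_dvd hf

theorem valuation_sub_pow_eq {p : ℕ} (hp : p.Prime) (hp0 : (p : F) ≠ 0)
    (hv : HasCenter v (Ideal.span {(p : S)})) {f h a : S} (hf : f = h ^ p + a * p)
    (ha : ¬ (p : S) ∣ a) {x : F} (hx : x ^ p = algebraMap S F f) :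
    v (x - algebraMap S F h) ^ p = v p := by
  have hx1 : v x ≤ 1 := hv.le_one_of_isIntegral (.of_pow hp.pos (hx ▸ isIntegral_algebraMap))
  refine valuation_sub_pow_prime_eq hp (v.ne_zero_iff.2 hp0) hv.valuation_natCast_lt_one hx1
    (hv.le_one h) ?_
  rw [hx, hf, map_add, map_pow, add_sub_cancel_left, map_mul, map_mul,
    hv.eq_one_of_notMem (by rwa [Ideal.mem_span_singleton]), one_mul, map_natCast]

end HasCenter

theorem exists_valuationSubring_hasCenter (F : Type*) [Field F] [Algebra S F] [FaithfulSMul S F]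
    (P : Ideal S) [P.IsPrime] :
    ∃ O : ValuationSubring F, HasCenter O.valuation P := by
  have hunit (y : P.primeCompl) : IsUnit (algebraMap S F y) := by
    rw [isUnit_iff_ne_zero, Ne, FaithfulSMul.algebraMap_eq_zero_iff S F]
    exact fun hy => y.2 (hy ▸ P.zero_mem)
  let φ : Localization.AtPrime P →+* F := IsLocalization.lift hunit
  have hφ (s : S) : φ (algebraMap S _ s) = algebraMap S F s := IsLocalization.lift_eq hunit s
  obtain ⟨O, hO, hlocal⟩ := IsLocalRing.exists_factor_valuationRing φ
  refine ⟨O, fun s => (O.valuation_le_one_iff _).2 (hφ s ▸ hO _), fun s => ?_⟩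
  let ψ : Localization.AtPrime P →+* O := φ.codRestrict O.toSubring hO
  have hmax : ψ (algebraMap S _ s) ∈ IsLocalRing.maximalIdeal O ↔ s ∈ P := by
    rw [IsLocalRing.mem_maximalIdeal, map_mem_nonunits_iff ψ, ← IsLocalRing.mem_maximalIdeal,
      IsLocalization.AtPrime.to_map_mem_maximal_iff _ P]
  rwa [O.valuation_lt_one_iff, show ((ψ (algebraMap S _ s) : O) : F) = _ from hφ s] at hmax

theorem coeff_mem_of_valuation_aeval_le {P : Ideal S} (hv : HasCenter v P) {s : F} (hs0 : s ≠ 0)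
    (hs1 : v s < 1) {N : ℕ} (hP : ∀ r ∈ P, v (algebraMap S F r) ≤ v s ^ N) {n : ℕ} (hn : n ≤ N)
    {W : S[X]} (hW : v (aeval s W) ≤ v s ^ n) {k : ℕ} (hk : k < n) : W.coeff k ∈ P := by
  induction n generalizing W k with
  | zero => exact absurd hk k.not_lt_zero
  | succ n ih =>
    have hsplit : aeval s W = aeval s W.divX * s + algebraMap S F (W.coeff 0) := by
      conv_lhs => rw [← W.divX_mul_X_add]
      simp
    have hdivX1 : v (aeval s W.divX) ≤ 1 := by
      rw [aeval_eq_sum_range]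
      refine v.map_sum_le fun i _ => ?_
      rw [Algebra.smul_def, map_mul, map_pow]
      exact mul_le_one' (hv.le_one _) (pow_le_one' hs1.le i)
    have hW0 : W.coeff 0 ∈ P := by
      rw [← hv.lt_one_iff, ← sub_eq_of_eq_add' hsplit]
      refine v.map_sub_lt (hW.trans_lt (pow_lt_one₀ zero_le hs1 n.succ_ne_zero)) ?_
      rw [map_mul]
      exact mul_lt_one_of_nonneg_of_lt_one_right hdivX1 zero_le hs1
    have hdivX : v (aeval s W.divX) ≤ v s ^ n := by
      refine (mul_le_mul_iff_left₀ (zero_lt_iff.2 ((v.ne_zero_iff).2 hs0))).1 ?_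
      rw [← pow_succ, ← map_mul, ← sub_eq_of_eq_add hsplit]
      exact v.map_sub_le hW ((hP _ hW0).trans (pow_le_pow_right_of_le_one' hs1.le hn))
    cases k with
    | zero => exact hW0
    | succ k => exact coeff_divX (p := W) ▸ ih (by omega) hdivX (by omega)

theorem coeff_add_mul_coeff_succ_mem {p : ℕ} (hp : p.Prime) (hpS : Prime (p : S))
    (hv : HasCenter v (Ideal.span {(p : S)})) {t : F} {h : S}
    (hs0 : t + algebraMap S F h ≠ 0) (hs1 : v (t + algebraMap S F h) < 1)
    (hps : v p ≤ v (t + algebraMap S F h) ^ (p - 1)) {W : S[X]} (hdeg : W.natDegree < p)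
    (hW : v (aeval t W) ≤ v (t + algebraMap S F h) ^ (p - 1)) {k : ℕ} (hk : k < p - 1) :
    W.coeff k + h * W.coeff (k + 1) ∈ Ideal.span {(p : S)} := by
  have hspan (r : S) (hr : r ∈ Ideal.span {(p : S)}) :
      v (algebraMap S F r) ≤ v (t + algebraMap S F h) ^ (p - 1) :=
    (hv.valuation_le_of_dvd (Ideal.mem_span_singleton.1 hr)).trans (by simpa using hps)
  have hshift : aeval (t + algebraMap S F h) (taylor (-h) W) = aeval t W := by
    simp [taylor_apply, aeval_comp]
  have hcoeff (j : ℕ) (hj : j < p - 1) : (taylor (-h) W).coeff j ∈ Ideal.span {(p : S)} :=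
    coeff_mem_of_valuation_aeval_le hv hs0 hs1 hspan le_rfl (hshift ▸ hW) hj
  have : CharP (S ⧸ Ideal.span {(p : S)}) p := by
    have := Fact.mk hp
    exact CharP.quotient S p hpS.not_isUnit
  let π := Ideal.Quotient.mk (Ideal.span {(p : S)})
  have hzero := coeff_add_mul_coeff_succ_eq_zero hp (F := W.map π) (h := π h)
    (natDegree_map_le.trans_lt hdeg) (fun j hj => ?_) hk
  · simpa [← map_mul, ← map_add, π, Ideal.Quotient.eq_zero_iff_mem] using hzero
  · rw [← map_neg, ← map_taylor, coeff_map]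
    exact Ideal.Quotient.eq_zero_iff_mem.2 (hcoeff j hj)

theorem mul_add_mem_of_valuation_sum_le {p : ℕ} (hp : p.Prime) (hpS : Prime (p : S))
    (hp0 : (p : F) ≠ 0) (hv : HasCenter v (Ideal.span {(p : S)})) {u t : F} {h : S}
    (hu : v u ^ p = v p) (hs : v (u * (t + algebraMap S F h)) ^ (p - 1) = v p) {r : ℕ → S}
    (hr : v (∑ k ∈ Finset.range p, algebraMap S F (r k) * (u * t) ^ (p - 1 - k) * u ^ k) ≤ v p)
    {k : ℕ} (hk : k < p - 1) :
    r k * h + r (k + 1) ∈ Ideal.span {(p : S)} := by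
  have hvp0 : v p ≠ 0 := v.ne_zero_iff.2 hp0
  have hp10 : p - 1 ≠ 0 := Nat.sub_ne_zero_of_lt hp.one_lt
  have hu0 : v u ≠ 0 := fun h0 => hvp0 (by rw [← hu, h0, zero_pow hp.ne_zero])
  have hu1 : v u < 1 := (pow_lt_one_iff_of_nonneg zero_le hp.ne_zero).1
    (hu.trans_lt hv.valuation_natCast_lt_one)
  have hupow : 0 < v u ^ (p - 1) := zero_lt_iff.2 (pow_ne_zero _ hu0)
  have hsu : v (t + algebraMap S F h) ^ (p - 1) = v u := by
    refine mul_left_cancel₀ hupow.ne' ?_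
    rw [pow_sub_one_mul hp.ne_zero, ← mul_pow, ← map_mul, hs, hu]
  set W : S[X] := ∑ k ∈ Finset.range p, C (r k) * X ^ (p - 1 - k)
  have hW : v (aeval t W) ≤ v u := by
    refine (mul_le_mul_iff_right₀ hupow).1 ?_
    rwa [pow_sub_one_mul hp.ne_zero, hu, ← map_pow, ← map_mul,
      pow_pred_mul_aeval_sum_C_mul_X_pow_sub]
  have hcoeff := coeff_add_mul_coeff_succ_mem hp hpS hv (t := t) (h := h) (k := p - 1 - (k + 1))
    (fun h0 => hu0 (by rw [← hsu, h0, map_zero, zero_pow hp10]))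
    ((pow_lt_one_iff_of_nonneg zero_le hp10).1 (hsu.trans_lt hu1))
    (by rw [hsu, ← hu]; exact pow_le_of_le_one zero_le hu1.le hp.ne_zero)
    (natDegree_sum_C_mul_X_pow_sub_lt r hp.ne_zero) (hsu ▸ hW) (by omega)
  rw [show p - 1 - (k + 1) + 1 = p - 1 - k by omega, coeff_sum_C_mul_X_pow_sub r (by omega),
    coeff_sum_C_mul_X_pow_sub r (by omega)] at hcoeff
  rwa [mul_comm, add_comm]

theorem mul_add_mul_mem_of_valuation_sum_le {p : ℕ} (hp : p.Prime) (hpS : Prime (p : S))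
    (hp0 : (p : F) ≠ 0) (hv : HasCenter v (Ideal.span {(p : S)})) {x y : F} {h₁ h₂ : S}
    (hh₁ : h₁ ∉ Ideal.span {(p : S)}) (hx1 : v x ≤ 1)
    (hx : v (x - algebraMap S F h₁) ^ p = v p) (hy : v (y - algebraMap S F h₂) ^ p ≤ v p)
    (hxy : v (x * y - algebraMap S F (h₁ * h₂)) ^ (p - 1) = v p) {c : ℕ → F} {r : ℕ → S}
    (hcr : ∀ k < p, v (c k - algebraMap S F (r k)) ≤ v (x - algebraMap S F h₁))
    (hc : v (∑ k ∈ Finset.range p,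
      c k * (y - algebraMap S F h₂) ^ (p - 1 - k) * (x - algebraMap S F h₁) ^ k) ≤ v p)
    {k : ℕ} (hk : k < p - 1) :
    r k * h₂ + r (k + 1) * h₁ ∈ Ideal.span {(p : S)} := by
  set u := x - algebraMap S F h₁ with hudef
  set w := y - algebraMap S F h₂ with hwdef
  have hu0 : u ≠ 0 := fun h0 => by
    rw [h0, map_zero, zero_pow hp.ne_zero, eq_comm, v.zero_iff] at hx
    exact hp0 hx
  have hwu : v w ≤ v u := (pow_le_pow_iff_left₀ zero_le zero_le hp.ne_zero).1 (hy.trans_eq hx.symm)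
  have hut : u * (x * w / u) = x * w := mul_div_cancel₀ _ hu0
  have hs : v (u * (x * w / u + algebraMap S F h₂)) ^ (p - 1) = v p := by
    rw [mul_add, hut, ← hxy, hudef, hwdef, map_mul (algebraMap S F)]
    ring_nf
  have hr : v (∑ j ∈ Finset.range p,
      algebraMap S F (h₁ ^ j * r j) * (x * w) ^ (p - 1 - j) * u ^ j) ≤ v p := by
    rw [← hx] at hc ⊢
    refine valuation_sum_mul_pow_mul_pow_le_of_pow_mul_sub_le hp.ne_zero hx1 hwu (fun j hj => ?_) hc
    rw [map_mul, map_pow]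
    exact valuation_pow_mul_sub_pow_mul_le hx1 (hv.le_one _) (hv.le_one _) (hcr j hj) j
  have hprime : (Ideal.span {(p : S)}).IsPrime := (Ideal.span_singleton_prime hpS.ne_zero).2 hpS
  have hmem := mul_add_mem_of_valuation_sum_le hp hpS hp0 hv hx hs (by rwa [hut]) hk
  refine (hprime.mem_or_mem (x := h₁ ^ k) ?_).resolve_left fun hpow =>
    hh₁ (hprime.mem_of_pow_mem _ hpow)
  convert hmem using 1
  ring

universe u

theorem exists_valuation_hasCenter_sub_pow_eq {K : Type*} {L : Type u} [Field L] [Algebra S L]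
    [IsFractionRing S L] [Field K] [Algebra L K] [Algebra.IsAlgebraic L K] [Algebra S K]
    [IsScalarTower S L K] {p : ℕ} (hp : p.Prime) (hpS : Prime (p : S)) {m h : S}
    (hm : ¬ (p : S) ∣ m) (hmh : (p : S) ^ 2 ∣ m - h ^ p)
    (hirr : Irreducible (X ^ p - C (algebraMap S L m))) {η : K} (hη : η ^ p = algebraMap S K m) :
    ∃ (Γ₀ : Type u) (_ : LinearOrderedCommGroupWithZero Γ₀) (v : Valuation K Γ₀),
      HasCenter v (Ideal.span {(p : S)}) ∧ v (η - algebraMap S K h) ^ (p - 1) = v p := by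
  have hprime : (Ideal.span {(p : S)}).IsPrime := (Ideal.span_singleton_prime hpS.ne_zero).2 hpS
  have : FaithfulSMul S (AlgebraicClosure L) := .trans S L _
  obtain ⟨O, hO⟩ := exists_valuationSubring_hasCenter (AlgebraicClosure L) (Ideal.span {(p : S)})
  have hmap (s : S) : algebraMap L (AlgebraicClosure L) (algebraMap S L s) = algebraMap S _ s :=
    (IsScalarTower.algebraMap_apply S L _ s).symm
  have hp0 : (p : AlgebraicClosure L) ≠ 0 := natCast_ne_zero_of_faithfulSMul S hpS.ne_zero
  have hmh' : O.valuation (algebraMap S _ (m - h ^ p)) ≤ O.valuation p ^ 2 := by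
    obtain ⟨d, hd⟩ := hmh
    rw [hd, map_mul, map_mul, map_pow, map_natCast, map_pow]
    exact mul_le_of_le_one_right' (hO.le_one d)
  obtain ⟨τ, hτ⟩ := exists_algHom_valuation_sub_pow_eq O.valuation hp hp0
    hO.valuation_natCast_lt_one.le hirr (η := η)
    (by rw [hη, IsScalarTower.algebraMap_apply S L K])
    (by rw [hmap]; exact hO.eq_one_of_notMem (by rwa [Ideal.mem_span_singleton]))
    (h := algebraMap S L h) (by rw [hmap]; exact hO.le_one h)
    (by rwa [← map_pow, ← map_sub, hmap])
  refine ⟨_, _, O.valuation.comap _, hO.comap (τ.restrictScalars S), ?_⟩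
  simpa [hmap] using hτ

end Center

section Pid

variable {S K : Type*} [CommRing S] [Field K] [Algebra S K] {p : ℕ} {ω μ : K} {h₁ h₂ : S}

theorem exists_sub_algebraMap_mem_of_adjoin_eq_top {A : Type*} [CommRing A] [Algebra S A]
    {t : Set A} (ht : Algebra.adjoin S t = ⊤) {P : Ideal A}
    (h : ∀ x ∈ t, ∃ r, x - algebraMap S A r ∈ P) (x : A) : ∃ r, x - algebraMap S A r ∈ P := by
  have hbot (x : A) : Ideal.Quotient.mkₐ S P x ∈ (⊥ : Subalgebra S (A ⧸ P)) ↔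
      ∃ r, x - algebraMap S A r ∈ P := by
    simp_rw [Algebra.mem_bot, Set.mem_range, ← Ideal.Quotient.eq, ← Ideal.Quotient.mkₐ_eq_mk S P,
      AlgHom.commutes, eq_comm]
  have htop : Algebra.adjoin S t ≤ (⊥ : Subalgebra S (A ⧸ P)).comap (Ideal.Quotient.mkₐ S P) :=
    Algebra.adjoin_le fun x hx => (hbot x).2 (h x hx)
  exact (hbot x).1 (htop (ht ▸ Algebra.mem_top))

theorem exists_sub_algebraMap_mem_Pid (p : ℕ) (h₁ h₂ : S) (x : Algebra.adjoin S {ω, μ}) :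
    ∃ r, x - algebraMap S _ r ∈ Pid p ω μ h₁ h₂ := by
  refine exists_sub_algebraMap_mem_of_adjoin_eq_top
    (Algebra.adjoin_adjoin_coe_preimage (R := S) (s := {ω, μ})) ?_ x
  rintro y (hy | hy)
  · obtain rfl : y = omegaA ω μ := Subtype.ext hy
    exact ⟨h₁, Ideal.subset_span (by simp)⟩
  · obtain rfl : y = muA ω μ := Subtype.ext hy
    exact ⟨h₂, Ideal.subset_span (by simp)⟩

theorem valuation_le_of_mem_Pid {Γ₀ : Type*} [LinearOrderedCommGroupWithZero Γ₀]
    {v : Valuation K Γ₀} (hv : ∀ a ∈ Algebra.adjoin S {ω, μ}, v a ≤ 1)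
    {γ : Γ₀} (hp : v p ≤ γ) (hω : v (ω - algebraMap S K h₁) ≤ γ)
    (hμ : v (μ - algebraMap S K h₂) ≤ γ)
    {z : Algebra.adjoin S {ω, μ}} (hz : z ∈ Pid p ω μ h₁ h₂) : v z ≤ γ := by
  refine valuation_le_of_mem_span (v := v.comap (algebraMap (Algebra.adjoin S {ω, μ}) K))
    (fun a => hv a a.2) ?_ hz
  rintro x (rfl | rfl | rfl)
  · simpa using hp
  · exact hω
  · exact hμ

theorem algebraMap_mem_Pid {r : S} (hr : r ∈ Ideal.span {(p : S)}) :
    algebraMap S (Algebra.adjoin S {ω, μ}) r ∈ Pid p ω μ h₁ h₂ := by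
  obtain ⟨d, rfl⟩ := Ideal.mem_span_singleton.1 hr
  rw [map_mul, map_natCast]
  exact Ideal.mul_mem_right _ _ (Ideal.subset_span (by simp))

theorem adjoin_pair_le_integralClosure {n : ℕ} (hn : n ≠ 0) {f g : S}
    (hω : ω ^ n = algebraMap S K f) (hμ : μ ^ n = algebraMap S K g) :
    Algebra.adjoin S {ω, μ} ≤ integralClosure S K := by
  refine Algebra.adjoin_le ?_
  rintro x (rfl | rfl)
  · exact .of_pow (Nat.pos_of_ne_zero hn) (hω ▸ isIntegral_algebraMap)
  · exact .of_pow (Nat.pos_of_ne_zero hn) (hμ ▸ isIntegral_algebraMap)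

theorem mul_add_mul_mem_Pid_of_isIntegral (L : Type*) [Field L] [Algebra S L]
    [IsFractionRing S L] [Algebra L K] [Algebra.IsAlgebraic L K] [IsScalarTower S L K]
    (hp : p.Prime) (hpS : Prime (p : S)) {f g a : S} (hf : f = h₁ ^ p + a * p) (ha : ¬ (p : S) ∣ a)
    (hg : (p : S) ∣ g - h₂ ^ p) (hpf : ¬ (p : S) ∣ f) (hpg : ¬ (p : S) ∣ g)
    (hfg : (p : S) ^ 2 ∣ f * g - (h₁ * h₂) ^ p)
    (hirr : Irreducible (X ^ p - C (algebraMap S L (f * g))))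
    (hω : ω ^ p = algebraMap S K f) (hμ : μ ^ p = algebraMap S K g)
    {c : ℕ → Algebra.adjoin S {ω, μ}}
    (hint : IsIntegral S ((p : K)⁻¹ * ∑ k ∈ Finset.range p,
      (c k : K) * (μ - algebraMap S K h₂) ^ (p - 1 - k) * (ω - algebraMap S K h₁) ^ k))
    {k : ℕ} (hk : k < p - 1) :
    c k * algebraMap S _ h₂ + c (k + 1) * algebraMap S _ h₁ ∈ Pid p ω μ h₁ h₂ := by
  obtain ⟨Γ₀, _, v, hv, hvX⟩ := exists_valuation_hasCenter_sub_pow_eq (L := L) (K := K) hp hpS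
    (hpS.dvd_or_dvd.mt (not_or.2 ⟨hpf, hpg⟩)) hfg hirr (η := ω * μ)
    (by rw [mul_pow, hω, hμ, map_mul])
  have : FaithfulSMul S K := .trans S L K
  have hp0 : (p : K) ≠ 0 := natCast_ne_zero_of_faithfulSMul S hpS.ne_zero
  have hA : Algebra.adjoin S {ω, μ} ≤ integralClosure S K :=
    adjoin_pair_le_integralClosure hp.ne_zero hω hμ
  have hvA (x : K) (hx : x ∈ Algebra.adjoin S {ω, μ}) : v x ≤ 1 := hv.le_one_of_isIntegral (hA hx)
  have hvω : v ω ≤ 1 := hvA ω (omegaA ω μ).2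
  have hvu : v (ω - algebraMap S K h₁) ^ p = v p := hv.valuation_sub_pow_eq hp hp0 hf ha hω
  have hvw : v (μ - algebraMap S K h₂) ^ p ≤ v p := hv.valuation_sub_pow_le hp hg hμ
  have hph₁ : h₁ ∉ Ideal.span {(p : S)} := by
    rw [Ideal.mem_span_singleton]
    exact fun hd => hpf (hf ▸ dvd_add (dvd_pow hd hp.ne_zero) (dvd_mul_left _ _))
  have hvP {z : Algebra.adjoin S {ω, μ}} (hz : z ∈ Pid p ω μ h₁ h₂) :
      v z ≤ v (ω - algebraMap S K h₁) := by
    refine valuation_le_of_mem_Pid hvA ?_ le_rfl ?_ hz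
    · rw [← hvu]
      exact pow_le_of_le_one zero_le (v.map_sub_le hvω (hv.le_one h₁)) hp.ne_zero
    · exact (pow_le_pow_iff_left₀ zero_le zero_le hp.ne_zero).1 (hvw.trans_eq hvu.symm)
  choose r hr using fun j => exists_sub_algebraMap_mem_Pid p h₁ h₂ (c j)
  have hsum := mul_le_mul_right (hv.le_one_of_isIntegral hint) (v p)
  rw [← map_mul, mul_inv_cancel_left₀ hp0, mul_one] at hsum
  have hmem := algebraMap_mem_Pid (ω := ω) (μ := μ) (h₁ := h₁) (h₂ := h₂) <|
    mul_add_mul_mem_of_valuation_sum_le hp hpS hp0 hv hph₁ hvω hvu hvw hvX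
      (fun j _ => hvP (hr j)) hsum hk
  convert Ideal.add_mem _ hmem (Ideal.add_mem _
    (Ideal.mul_mem_right (algebraMap S _ h₂) _ (hr k))
    (Ideal.mul_mem_right (algebraMap S _ h₁) _ (hr (k + 1)))) using 1
  rw [map_add, map_mul, map_mul]
  ring

theorem isIntegral_inv_mul_pow_pred_mul_sum [FaithfulSMul S K] (hp : p.Prime)
    (hpS : (p : S) ≠ 0) {f g : S} (hf : (p : S) ∣ f - h₁ ^ p) (hg : (p : S) ∣ g - h₂ ^ p)
    (hfg : (p : S) ^ 2 ∣ f * g - (h₁ * h₂) ^ p) (hω : ω ^ p = algebraMap S K f)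
    (hμ : μ ^ p = algebraMap S K g) {c : ℕ → Algebra.adjoin S {ω, μ}}
    (hc : ∀ k < p - 1,
      c k * algebraMap S _ h₂ + c (k + 1) * algebraMap S _ h₁ ∈ Pid p ω μ h₁ h₂) :
    IsIntegral S ((p : K)⁻¹ * (ω ^ (p - 1) * ∑ k ∈ Finset.range p,
      (c k : K) * (μ - algebraMap S K h₂) ^ (p - 1 - k) * (ω - algebraMap S K h₁) ^ k)) := by
  have hp0 : (p : K) ≠ 0 := natCast_ne_zero_of_faithfulSMul S hpS
  let R := integralClosure S K
  have hpR : (p : R) ≠ 0 := fun h => hp0 (congrArg Subtype.val h)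
  have : IsIntegrallyClosed R := .of_isIntegrallyClosed_of_isIntegrallyClosedIn R K
  let ι : Algebra.adjoin S {ω, μ} →ₐ[S] R :=
    Subalgebra.inclusion (adjoin_pair_le_integralClosure hp.ne_zero hω hμ)
  have hιω : ι (omegaA ω μ) ^ p = algebraMap S R f := Subtype.ext hω
  have hιμ : ι (muA ω μ) ^ p = algebraMap S R g := Subtype.ext hμ
  obtain ⟨d, hd⟩ : (p : R) ∣ ι (omegaA ω μ) ^ (p - 1) * ∑ k ∈ Finset.range p,
      ι (c k) * (ι (muA ω μ) - algebraMap S R h₂) ^ (p - 1 - k) *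
        (ι (omegaA ω μ) - algebraMap S R h₁) ^ k := by
    refine natCast_dvd_pow_pred_mul_sum hp hpR ?_ ?_ ?_ fun k hk => ?_
    · rw [hιω, ← map_pow, ← map_sub, ← map_natCast (algebraMap S R)]
      exact map_dvd _ hf
    · rw [hιμ, ← map_pow, ← map_sub, ← map_natCast (algebraMap S R)]
      exact map_dvd _ hg
    · rw [mul_pow, hιω, hιμ, ← map_natCast (algebraMap S R)]
      simp only [← map_mul, ← map_pow, ← map_sub]
      exact map_dvd _ hfg
    · simpa [Pid, Ideal.map_span, Set.image_insert_eq] using Ideal.mem_map_of_mem ι (hc k hk)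
  have hdK := congrArg (algebraMap R K) hd
  simp only [map_mul, map_pow, map_sum, map_sub, map_natCast] at hdK
  exact ((inv_mul_eq_iff_eq_mul₀ hp0).2 hdK : _ = (d : K)) ▸ d.2

theorem isIntegral_inv_mul_sum (L : Type*) [IsDomain S] [IsIntegrallyClosed S] [Field L]
    [Algebra S L] [IsFractionRing S L] [Algebra L K] [IsScalarTower S L K] (hp : p.Prime)
    (hpS : Prime (p : S)) {f g : S} (hf : (p : S) ∣ f - h₁ ^ p)
    (hg : (p : S) ∣ g - h₂ ^ p) (hpf : ¬ (p : S) ∣ f)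
    (hfg : (p : S) ^ 2 ∣ f * g - (h₁ * h₂) ^ p)
    (hω : ω ^ p = algebraMap S K f) (hμ : μ ^ p = algebraMap S K g)
    {c : ℕ → Algebra.adjoin S {ω, μ}}
    (hc : ∀ k < p - 1,
      c k * algebraMap S _ h₂ + c (k + 1) * algebraMap S _ h₁ ∈ Pid p ω μ h₁ h₂) :
    IsIntegral S ((p : K)⁻¹ * ∑ k ∈ Finset.range p,
      (c k : K) * (μ - algebraMap S K h₂) ^ (p - 1 - k) * (ω - algebraMap S K h₁) ^ k) := by
  have : FaithfulSMul S K := .trans S L K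
  have hp0 : (p : K) ≠ 0 := natCast_ne_zero_of_faithfulSMul S hpS.ne_zero
  have hA : Algebra.adjoin S {ω, μ} ≤ integralClosure S K :=
    adjoin_pair_le_integralClosure hp.ne_zero hω hμ
  refine isIntegral_of_smul_of_smul L hpS hpf ?_ ?_
  · rw [Algebra.smul_def, map_natCast, mul_inv_cancel_left₀ hp0]
    refine hA (sum_mem fun k _ => mul_mem (mul_mem (c k).2 ?_) ?_)
    · exact pow_mem (muA ω μ - algebraMap S _ h₂).2 _
    · exact pow_mem (omegaA ω μ - algebraMap S _ h₁).2 _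
  · rw [Algebra.smul_def, ← hω, ← mul_pow_sub_one hp.ne_zero, mul_assoc,
      mul_left_comm (ω ^ (p - 1))]
    exact (hA (omegaA ω μ).2).mul
      (isIntegral_inv_mul_pow_pred_mul_sum hp hpS.ne_zero hf hg hfg hω hμ hc)

end Pid

theorem stmt10_general {S K L : Type*} [CommRing S] [IsDomain S] [IsIntegrallyClosed S] [Field L]
    [Algebra S L] [IsFractionRing S L] [Field K] [Algebra L K] [Algebra S K] [IsScalarTower S L K]
    {p : ℕ} (hp : p.Prime) (hpS : Prime (p : S))
    {f g h₁ h₂ a b : S} (hf : f = h₁ ^ p + a * p) (hg : g = h₂ ^ p + b * p)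
    (hfg : ¬ ((p : S) ∣ f ∧ (p : S) ∣ g)) {ω μ : K}
    (hω : ω ^ p = algebraMap S K f) (hμ : μ ^ p = algebraMap S K g)
    (hKgen : Algebra.adjoin L ({ω, μ} : Set K) = ⊤) (hdeg : Module.finrank L K = p ^ 2)
    (hicω : IsIntegrallyClosed (Algebra.adjoin S ({ω} : Set K)))
    (hicμ : IsIntegrallyClosed (Algebra.adjoin S ({μ} : Set K)))
    (hfg1 : ∃ x y : S, f * g = x ^ p + y * (p : S) ^ 2)
    (aa : ℕ → Algebra.adjoin S ({ω, μ} : Set K)) :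
    ((p : K)⁻¹ * ∑ i ∈ Finset.Icc 1 p,
        (aa i : K) * (μ - algebraMap S K h₂) ^ (p - i) * (ω - algebraMap S K h₁) ^ (i - 1)) ∈
      integralClosure S K ↔
    ∀ i : ℕ, 2 ≤ i → i ≤ p →
      aa (i - 1) * algebraMap S _ h₂ + aa i * algebraMap S _ h₁ ∈ Pid p ω μ h₁ h₂ := by
  have : FiniteDimensional L K := .of_finrank_pos (hdeg ▸ pow_pos hp.pos 2)
  have htop : IntermediateField.adjoin L {ω, μ} = ⊤ :=
    IntermediateField.adjoin_eq_top_of_algebra L _ hKgen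
  have hωL : ω ^ p = algebraMap L K (algebraMap S L f) :=
    hω.trans (IsScalarTower.algebraMap_apply S L K f)
  have hμL : μ ^ p = algebraMap L K (algebraMap S L g) :=
    hμ.trans (IsScalarTower.algebraMap_apply S L K g)
  have ha : ¬ (p : S) ∣ a := not_natCast_dvd_of_isIntegrallyClosed_adjoin L hp hpS hf hω
    (irreducible_X_pow_sub_C_of_finrank_eq_sq hp.ne_zero hωL hμL htop hdeg) hicω
  have hb : ¬ (p : S) ∣ b := not_natCast_dvd_of_isIntegrallyClosed_adjoin L hp hpS hg hμ
    (irreducible_X_pow_sub_C_of_finrank_eq_sq hp.ne_zero hμL hωL (Set.pair_comm ω μ ▸ htop) hdeg)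
    hicμ
  have hirr : Irreducible (X ^ p - C (algebraMap S L (f * g))) :=
    map_mul (algebraMap S L) f g ▸
      irreducible_X_pow_sub_C_mul_of_finrank_eq_sq hp.one_lt hωL hμL htop hdeg
  obtain ⟨x, y, hxy⟩ := hfg1
  have hx : (p : S) ^ 2 ∣ f * g - x ^ p := by simp [hxy]
  have hpf : ¬ (p : S) ∣ f := not_dvd_of_sq_dvd_mul_sub_pow hpS hp.two_le hf ha hfg hx
  have hpg : ¬ (p : S) ∣ g :=
    not_dvd_of_sq_dvd_mul_sub_pow hpS hp.two_le hg hb (mt And.symm hfg) (mul_comm f g ▸ hx)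
  have hdf : (p : S) ∣ f - h₁ ^ p := by simp [hf]
  have hdg : (p : S) ∣ g - h₂ ^ p := by simp [hg]
  have hdfg : (p : S) ^ 2 ∣ f * g - (h₁ * h₂) ^ p :=
    sq_dvd_sub_pow_of_sq_dvd_sub_pow hp hpS hx (mul_pow h₁ h₂ p ▸ dvd_mul_sub_mul hdf hdg)
  rw [sum_Icc_one_mul_pow_mul_pow (fun i => (aa i : K)), mem_integralClosure_iff]
  constructor
  · intro hint i hi2 hip
    obtain ⟨k, rfl⟩ := Nat.exists_eq_add_of_le' hi2
    exact mul_add_mul_mem_Pid_of_isIntegral L hp hpS hf ha hdg hpf hpg hdfg hirr hω hμ hint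
      (k := k) (by omega)
  · intro hmem
    exact isIntegral_inv_mul_sum L hp hpS hdf hdg hpf hdfg hω hμ fun k hk =>
      hmem (k + 2) (by omega) (by omega)

theorem stmt10
    {S : Type*} [CommRing S] [IsDomain S] [IsNoetherianRing S] [IsIntegrallyClosed S]
    {L : Type*} [Field L] [CharZero L] [Algebra S L] [IsFractionRing S L]
    {K : Type*} [Field K] [Algebra L K] [Algebra S K] [IsScalarTower S L K]
    {p : ℕ} (hp : p.Prime) (hp3 : 3 ≤ p) (hpS : Prime ((p : ℕ) : S))
    (hSmodp : IsIntegrallyClosed (S ⧸ Ideal.span {((p : ℕ) : S)}))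
    {f g h₁ h₂ a b : S} (hf : f = h₁ ^ p + a * (p : S)) (hg : g = h₂ ^ p + b * (p : S))
    (hfg : (¬IsUnit f ∧ ¬IsUnit g ∧ PaperSquarefree f ∧ PaperSquarefree g ∧ SatisfiesA1 f g) ∨
      (IsUnit f ∧ IsUnit g ∧ (∀ x : S, x ^ p ≠ f) ∧ (∀ x : S, x ^ p ≠ g)))
    {ω μ : K} (hω : ω ^ p = algebraMap S K f) (hμ : μ ^ p = algebraMap S K g)
    (hKgen : Algebra.adjoin L ({ω, μ} : Set K) = ⊤)
    (hdeg : Module.finrank L K = p ^ 2)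
    (hicω : IsIntegrallyClosed (Algebra.adjoin S ({ω} : Set K)))
    (hicμ : IsIntegrallyClosed (Algebra.adjoin S ({μ} : Set K)))
    (hh₁ : h₁ ≠ 0) (hh₂ : h₂ ≠ 0)
    (hfg1 : ∃ x y : S, f * g = x ^ p + y * (p : S) ^ 2)
    (aa : ℕ → Algebra.adjoin S ({ω, μ} : Set K)) :
    ((p : K)⁻¹ * ∑ i ∈ Finset.Icc 1 p,
        (aa i : K) * (μ - algebraMap S K h₂) ^ (p - i) * (ω - algebraMap S K h₁) ^ (i - 1)) ∈
      integralClosure S K ↔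
    ∀ i : ℕ, 2 ≤ i → i ≤ p →
      aa (i - 1) * algebraMap S _ h₂ + aa i * algebraMap S _ h₁ ∈ Pid p ω μ h₁ h₂ := by
  have hpfg : ¬ ((p : S) ∣ f ∧ (p : S) ∣ g) := hfg.elim (·.2.2.2.2.not_dvd_and_dvd hpS)
    fun hunit hdvd => hpS.not_isUnit (isUnit_of_dvd_unit hdvd.1 hunit.1)
  exact stmt10_general hp hpS hf hg hpfg hω hμ hKgen hdeg hicω hicμ hfg1 aa
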